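/- arXiv:2405.08532 — 3 statements merged into one kernel-verified Lean document; each statement's English description precedes it below -/
import Mathlib

section
/- Let α ∈ (0,1)^d be a totally irrational frequency vector. For every hypercubic billiard sequence u with frequency α, the discrepancy satisfies (1 + (d−2)‖α‖_∞)/2 ≤ Δ_α(u) ≤ 1 + (d−2)‖α‖_∞; in particular Δ_α(u) ≤ d − 1 and Δ_α(u) ≥ (d−1)/d. -/
open scoped ENNReal

/-- Projection onto `1^⊥` along `ℝα`: `π_α(x) = x - (Σ x_i) • α`, so `π_α(e_i) = e_i - α`. -/
noncomputable def piAlpha {d : ℕ} (α : Fin d → ℝ) (x : Fin d → ℝ) : Fin d → ℝ :=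
  x - (∑ j, x j) • α

/-- `E_{α,i} = π_α(F_i)`, the projection of the upper face `F_i` of the unit cube. -/
noncomputable def Ealphai {d : ℕ} (α : Fin d → ℝ) (i : Fin d) : Set (Fin d → ℝ) :=
  piAlpha α '' {x | x ∈ Set.Icc (0 : Fin d → ℝ) 1 ∧ x i = 1}

/-- `E_α = π_α([0,1]^d)`. -/
noncomputable def Ealpha {d : ℕ} (α : Fin d → ℝ) : Set (Fin d → ℝ) :=
  piAlpha α '' Set.Icc (0 : Fin d → ℝ) 1

open MeasureTheory Filter Topology in
lemma kron_torus {ι : Type} [Fintype ι] (a : ι → ℝ)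
    (ha : ∀ (k : ι → ℤ) (m : ℤ), ∑ i, (k i : ℝ) * a i = m → k = 0)
    (x y : UnitAddTorus ι) (ε : ℝ) (hε : 0 < ε) :
    ∃ n : ℕ, dist (x + n • (fun i => (a i : UnitAddCircle))) y < ε := by
  by_contra! hcon
  set b : UnitAddTorus ι := fun i => (a i : UnitAddCircle) with hb
  let μ : Measure (UnitAddTorus ι) := Measure.addHaarMeasure ⊤
  have hμ1 : μ Set.univ = 1 := by
    have := Measure.addHaarMeasure_self (K₀ := (⊤ : TopologicalSpace.PositiveCompacts (UnitAddTorus ι)))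
    simpa using this
  have : IsProbabilityMeasure μ := ⟨hμ1⟩
  -- character facts
  have hchar : ∀ (k : ι → ℤ) (z w : UnitAddTorus ι),
      UnitAddTorus.mFourier k (z + w) = UnitAddTorus.mFourier k z * UnitAddTorus.mFourier k w := by
    intro k z w
    simp only [UnitAddTorus.mFourier, ContinuousMap.coe_mk, ← Finset.prod_mul_distrib]
    refine Finset.prod_congr rfl fun i _ => ?_
    simp [fourier_apply, smul_add, AddCircle.toCircle_add]
  have hcharn : ∀ (k : ι → ℤ) (n : ℕ) (z : UnitAddTorus ι),
      UnitAddTorus.mFourier k (z + n • b)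
        = UnitAddTorus.mFourier k z * UnitAddTorus.mFourier k b ^ n := by
    intro k n z
    induction n with
    | zero => simp
    | succ n ih => rw [succ_nsmul, ← add_assoc, hchar, ih, pow_succ, mul_assoc]
  have hne : ∀ k : ι → ℤ, k ≠ 0 → UnitAddTorus.mFourier k b ≠ 1 := by
    intro k hk h
    apply hk
    have h2 : UnitAddTorus.mFourier k b
        = Complex.exp (2 * Real.pi * Complex.I * ((∑ i, (k i : ℝ) * a i : ℝ) : ℂ)) := by
      simp only [UnitAddTorus.mFourier, ContinuousMap.coe_mk, hb, fourier_coe_apply]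
      rw [← Complex.exp_sum]
      congr 1
      push_cast
      rw [Finset.mul_sum]
      refine Finset.sum_congr rfl fun i _ => ?_
      ring
    rw [h2, Complex.exp_eq_one_iff] at h
    obtain ⟨m, hm⟩ := h
    apply ha k m
    have h3 : (2 * Real.pi * Complex.I : ℂ) ≠ 0 := Complex.two_pi_I_ne_zero
    have h4 : ((∑ i, (k i : ℝ) * a i : ℝ) : ℂ) = m := by
      apply mul_left_cancel₀ h3
      rw [hm]; ring
    exact_mod_cast h4
  have hint : ∀ k : ι → ℤ, k ≠ 0 → ∫ z, UnitAddTorus.mFourier k z ∂μ = 0 := by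
    intro k hk
    have h1 := integral_add_right_eq_self (μ := μ) (fun z => UnitAddTorus.mFourier k z) b
    simp only [hchar] at h1
    rw [integral_mul_const] at h1
    have h2 : (∫ z, UnitAddTorus.mFourier k z ∂μ) * (UnitAddTorus.mFourier k b - 1) = 0 := by
      rw [mul_sub, h1]; ring
    rcases mul_eq_zero.1 h2 with h | h
    · exact h
    · exact absurd (sub_eq_zero.1 h) (hne k hk)
  have hintg : ∀ f : C(UnitAddTorus ι, ℂ), Integrable (fun z => f z) μ := fun f =>
    f.continuous.integrable_of_hasCompactSupport (HasCompactSupport.of_compactSpace _)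
  have hP : ∀ P ∈ Submodule.span ℂ (Set.range (UnitAddTorus.mFourier (d := ι))),
      Tendsto (fun N : ℕ => (N : ℂ)⁻¹ * ∑ n ∈ Finset.range N, P (x + n • b)) atTop
        (𝓝 (∫ z, P z ∂μ)) := by
    intro P hP
    induction hP using Submodule.span_induction with
    | mem f hf =>
      obtain ⟨k, rfl⟩ := hf
      by_cases hk : k = 0
      · subst hk
        simp only [UnitAddTorus.mFourier_zero, ContinuousMap.one_apply, integral_const]
        refine Tendsto.congr' ?_ tendsto_const_nhds
        filter_upwards [eventually_gt_atTop 0] with N hN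
        have : (N : ℂ) ≠ 0 := by exact_mod_cast hN.ne'
        simp [this]
      · rw [hint k hk]
        set c := UnitAddTorus.mFourier k b with hc
        have hc1 : c ≠ 1 := hne k hk
        have hnorm : ∀ z, ‖UnitAddTorus.mFourier k z‖ ≤ 1 := fun z => 
          (ContinuousMap.norm_coe_le_norm _ _).trans UnitAddTorus.mFourier_norm.le
        have hlim : Tendsto (fun N : ℕ => (N : ℝ)⁻¹ * (2 / ‖c - 1‖)) atTop (𝓝 0) := by
          simpa using (tendsto_inv_atTop_nhds_zero_nat (𝕜 := ℝ)).mul_const (2 / ‖c - 1‖)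
        refine squeeze_zero_norm (fun N => ?_) hlim
        rw [norm_mul, norm_inv, Complex.norm_natCast]
        refine mul_le_mul_of_nonneg_left ?_ (by positivity)
        simp only [hcharn]
        rw [← Finset.mul_sum, geom_sum_eq hc1, norm_mul, norm_div]
        have h1 : ‖c ^ N - 1‖ ≤ 2 := by
          refine (norm_sub_le _ _).trans ?_
          rw [norm_pow, norm_one]
          have := pow_le_one₀ (n := N) (norm_nonneg c) (hnorm b)
          linarith
        have h2 := hnorm x
        calc _ ≤ 1 * (2 / ‖c - 1‖) := by gcongr
          _ = _ := one_mul _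
    | zero => simp
    | add f g _ _ hf hg =>
      have := hf.add hg
      simp only [ContinuousMap.add_apply]
      rw [integral_add (hintg f) (hintg g)]
      refine this.congr fun N => ?_
      rw [Finset.sum_add_distrib, mul_add]
    | smul c f _ hf =>
      have := hf.const_mul c
      simp only [ContinuousMap.smul_apply, smul_eq_mul]
      rw [integral_const_mul]
      refine this.congr fun N => ?_
      rw [← Finset.mul_sum]; ring
  -- bump
  let g : UnitAddTorus ι → ℝ := fun z => max 0 (ε - dist z y)
  have hgc : Continuous g := by fun_prop
  let f : C(UnitAddTorus ι, ℂ) := ⟨fun z => (g z : ℂ), by fun_prop⟩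
  have hgpos : 0 < ∫ z, g z ∂μ := by
    refine hgc.integral_pos_of_hasCompactSupport_nonneg_nonzero
      (HasCompactSupport.of_compactSpace _) (fun z => le_max_left _ _) (x := y) ?_
    simp [g, hε.ne', hε.le]
  have hf0 : ∀ n : ℕ, f (x + n • b) = 0 := by
    intro n
    have := hcon n
    simp only [f, g, ContinuousMap.coe_mk]
    rw [max_eq_left (by linarith)]; simp
  set I := ∫ z, g z ∂μ with hI
  have hfI : ∫ z, f z ∂μ = (I : ℂ) := by
    simp only [f, ContinuousMap.coe_mk, hI]
    exact integral_ofReal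
  have hmem : f ∈ closure (Submodule.span ℂ (Set.range (UnitAddTorus.mFourier (d := ι))) :
      Set C(UnitAddTorus ι, ℂ)) := by
    rw [← Submodule.topologicalClosure_coe, UnitAddTorus.span_mFourier_closure_eq_top]; trivial
  obtain ⟨P, hPm, hPd⟩ := Metric.mem_closure_iff.1 hmem (I / 4) (by positivity)
  have hPf : ∀ z, ‖P z - f z‖ ≤ I / 4 := fun z => by
    rw [← dist_eq_norm, dist_comm]
    exact (ContinuousMap.dist_apply_le_dist z).trans hPd.le
  have h1 : ‖∫ z, P z ∂μ‖ ≤ I / 4 := by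
    refine le_of_tendsto (hP P hPm).norm ?_
    filter_upwards [eventually_gt_atTop 0] with N hN
    have hN' : (0 : ℝ) < N := by exact_mod_cast hN
    rw [norm_mul, norm_inv, Complex.norm_natCast]
    have : ‖∑ n ∈ Finset.range N, P (x + n • b)‖ ≤ ∑ n ∈ Finset.range N, I / 4 := by
      refine norm_sum_le_of_le _ fun n _ => ?_
      have := hPf (x + n • b)
      rwa [hf0, sub_zero] at this
    rw [Finset.sum_const, Finset.card_range, nsmul_eq_mul] at this
    rw [inv_mul_le_iff₀ hN']; exact this
  have h2 : ‖∫ z, P z ∂μ - ∫ z, f z ∂μ‖ ≤ I / 4 := by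
    rw [← integral_sub (hintg P) (hintg f)]
    have := norm_integral_le_of_norm_le_const (μ := μ) (f := fun z => P z - f z)
      (Eventually.of_forall hPf)
    simpa [Measure.real, hμ1] using this
  have h3 : ‖∫ z, f z ∂μ‖ = I := by
    rw [hfI, Complex.norm_real, Real.norm_of_nonneg hgpos.le]
  have h4 := norm_sub_norm_le (∫ z, f z ∂μ) (∫ z, P z ∂μ)
  rw [norm_sub_rev] at h4
  linarith

lemma kron_real {ι : Type} [Fintype ι] (a : ι → ℝ)
    (ha : ∀ (k : ι → ℤ) (m : ℤ), ∑ i, (k i : ℝ) * a i = m → k = 0)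
    (x y : ι → ℝ) (ε : ℝ) (hε : 0 < ε) :
    ∃ (n : ℕ) (v : ι → ℤ), ∀ i, |x i + n * a i - v i - y i| < ε := by
  obtain ⟨n, hn⟩ := kron_torus a ha (fun i => (x i : UnitAddCircle)) (fun i => (y i : UnitAddCircle))
    ε hε
  refine ⟨n, fun i => round (x i + n * a i - y i), fun i => ?_⟩
  have h := (dist_pi_lt_iff hε).1 hn i
  rw [dist_eq_norm] at h
  have e : ((fun i => (x i : UnitAddCircle)) + n • (fun i => (a i : UnitAddCircle))) i - (y i : UnitAddCircle)
      = ((x i + n * a i - y i : ℝ) : UnitAddCircle) := by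
    simp [← nsmul_eq_mul]
  rw [e, UnitAddCircle.norm_eq] at h
  convert h using 2
  ring

lemma piAlpha_sum {d : ℕ} (α : Fin d → ℝ) (hsum : ∑ i, α i = 1) (z : Fin d → ℝ) :
    ∑ i, piAlpha α z i = 0 := by
  simp [piAlpha, Finset.sum_sub_distrib, ← Finset.mul_sum, hsum]

lemma piAlpha_mem_range {d : ℕ} (α : Fin d → ℝ) (hα : ∀ i, α i ∈ Set.Ioo (0:ℝ) 1)
    (z : Fin d → ℝ) (hz : z ∈ Set.Icc (0 : Fin d → ℝ) 1) (i : Fin d) :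
    -((d:ℝ) - 1) * α i ≤ piAlpha α z i ∧ piAlpha α z i ≤ 1 - α i := by
  have h0 : ∀ j, 0 ≤ z j := fun j => hz.1 j
  have h1 : ∀ j, z j ≤ 1 := fun j => hz.2 j
  have hs : ∑ j, z j = z i + ∑ j ∈ Finset.univ.erase i, z j :=
    (Finset.add_sum_erase _ _ (Finset.mem_univ i)).symm
  have hr0 : 0 ≤ ∑ j ∈ Finset.univ.erase i, z j := Finset.sum_nonneg fun j _ => h0 j
  have hr1 : ∑ j ∈ Finset.univ.erase i, z j ≤ (d:ℝ) - 1 := by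
    have := Finset.sum_le_sum (s := Finset.univ.erase i) (fun j _ => h1 j)
    have hd : 1 ≤ d := by have := i.2; omega
    simpa [Finset.card_erase_of_mem, Nat.cast_sub hd] using this
  simp only [piAlpha, Pi.sub_apply, Pi.smul_apply, smul_eq_mul]
  rw [hs]
  have ha := hα i
  constructor
  · nlinarith [mul_nonneg (h0 i) (sub_nonneg.2 ha.2.le), mul_nonneg ha.1.le (sub_nonneg.2 hr1)]
  · nlinarith [mul_nonneg (sub_nonneg.2 (h1 i)) (sub_nonneg.2 ha.2.le), mul_nonneg ha.1.le hr0]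

/-- interior points of `E_α` are determined by their class modulo the lattice -/
lemma piAlpha_unique {d : ℕ} (α : Fin d → ℝ) (hα : ∀ i, α i ∈ Set.Ioo (0:ℝ) 1)
    (z w : Fin d → ℝ) (hz : ∀ i, z i ∈ Set.Ioo (0:ℝ) 1) (hw : w ∈ Set.Icc (0 : Fin d → ℝ) 1)
    (v : Fin d → ℤ) (hv : ∑ i, v i = 0)
    (h : ∀ i, piAlpha α z i - piAlpha α w i = v i) : v = 0 := by
  by_contra hne
  have hex : ∃ i, v i ≠ 0 := by
    by_contra! hc; exact hne (funext hc)
  obtain ⟨p, hp⟩ : ∃ i, 0 < v i := by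
    by_contra! hc
    obtain ⟨i, hi⟩ := hex
    exact hi ((Finset.sum_eq_zero_iff_of_nonpos fun j _ => hc j).1 hv i (Finset.mem_univ i))
  obtain ⟨q, hq⟩ : ∃ i, v i < 0 := by
    by_contra! hc
    obtain ⟨i, hi⟩ := hex
    exact hi ((Finset.sum_eq_zero_iff_of_nonneg fun j _ => hc j).1 hv i (Finset.mem_univ i))
  have hp1 : (1:ℝ) ≤ v p := by exact_mod_cast hp
  have hq1 : (v q : ℝ) ≤ -1 := by exact_mod_cast (by omega : v q ≤ -1)
  have ep := h p
  have eq := h q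
  simp only [piAlpha, Pi.sub_apply, Pi.smul_apply, smul_eq_mul] at ep eq
  have w0 := hw.1 p
  have w1 := hw.2 q
  simp only [Pi.zero_apply, Pi.one_apply] at w0 w1
  rcases le_total (∑ j, w j) (∑ j, z j) with ht | ht
  · have := mul_le_mul_of_nonneg_right ht (hα p).1.le
    linarith [(hz p).2]
  · have := mul_le_mul_of_nonneg_right ht (hα q).1.le
    linarith [(hz q).1]

lemma billiard_dense {d : ℕ} (hd : 2 ≤ d)
    (α : Fin d → ℝ) (hα : ∀ i, α i ∈ Set.Ioo (0:ℝ) 1) (hsum : ∑ i, α i = 1)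
    (hirr : LinearIndependent ℚ α)
    (x : ℕ → Fin d → ℝ) (c : ℕ → Fin d → ℤ) (hc : ∀ n, ∑ i, c n i = n)
    (hx : ∀ n, x n ∈ Ealpha α)
    (hxc : ∀ n i, x n i = x 0 i + n * α i - c n i)
    (z : Fin d → ℝ) (hz : ∀ i, z i ∈ Set.Ioo (0:ℝ) 1) (η : ℝ) (hη : 0 < η) (i₀ : Fin d) :
    ∃ n, |x n i₀ - piAlpha α z i₀| < η := by
  classical
  obtain ⟨δ, hδ, hδη, hδz⟩ : ∃ δ > 0, δ ≤ η ∧ ∀ i, δ ≤ z i ∧ δ ≤ 1 - z i := by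
    have hne : (Finset.univ : Finset (Fin d)).Nonempty := ⟨i₀, Finset.mem_univ _⟩
    refine ⟨min η (Finset.univ.inf' hne fun i => min (z i) (1 - z i)), ?_, min_le_left _ _, ?_⟩
    · rw [gt_iff_lt, lt_min_iff, Finset.lt_inf'_iff]
      exact ⟨hη, fun i _ => lt_min (hz i).1 (by linarith [(hz i).2])⟩
    · intro i
      have h := (min_le_right η _).trans
        (Finset.inf'_le (fun i => min (z i) (1 - z i)) (Finset.mem_univ i))
      exact ⟨h.trans (min_le_left _ _), h.trans (min_le_right _ _)⟩
  have hd0 : (0:ℝ) < d := by positivity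
  have hxs : ∀ n, ∑ i, x n i = 0 := by
    intro n
    obtain ⟨w, _, hw⟩ := hx n
    rw [← hw]; exact piAlpha_sum α hsum w
  -- split sums
  have hsplit : ∀ f : Fin d → ℝ, ∑ i, f i = f i₀ + ∑ j : {j // j ≠ i₀}, f j := by
    intro f
    exact Fintype.sum_eq_add_sum_subtype_ne f i₀
  obtain ⟨n, v, hv⟩ := kron_real (ι := {j // j ≠ i₀}) (fun j => α j) (by
      intro k m hk
      let q : Fin d → ℚ := fun j => if hj : j ≠ i₀ then (k ⟨j, hj⟩ : ℚ) - m else -m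
      have hq : ∑ j, q j • α j = 0 := by
        rw [hsplit (fun j => q j • α j)]
        have e1 : q i₀ = -m := by simp [q]
        have e2 : ∀ j : {j // j ≠ i₀}, q j = (k j : ℚ) - m := by
          intro j; simp [q, j.2]
        have e3 := hsplit α
        simp only [e1, e2, Rat.smul_def]
        push_cast
        simp only [sub_mul, Finset.sum_sub_distrib, ← Finset.mul_sum]
        rw [hk]
        rw [hsum] at e3
        linear_combination (m:ℝ) * e3
      have h0 := Fintype.linearIndependent_iff.1 hirr q hq
      have hm : (m:ℚ) = 0 := by simpa [q] using h0 i₀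
      funext j
      have := h0 j
      simp only [q, j.2, ne_eq, not_false_eq_true, dif_pos, hm, sub_zero] at this
      exact_mod_cast this)
    (fun j => x 0 j) (fun j => piAlpha α z j) (δ / d) (by positivity)
  let V : Fin d → ℤ := fun j => if hj : j ≠ i₀ then v ⟨j, hj⟩ else n - ∑ j, v j
  have hV1 : V i₀ = n - ∑ j, v j := by simp [V]
  have hV2 : ∀ j : {j // j ≠ i₀}, V j = v j := by intro j; simp [V, j.2]
  have hVs : ∑ j, V j = n := by
    rw [Fintype.sum_eq_add_sum_subtype_ne V i₀, hV1]
    simp [hV2]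
  let e : Fin d → ℝ := fun i => x 0 i + n * α i - V i - piAlpha α z i
  have hes : ∑ i, e i = 0 := by
    have : (∑ i, (V i : ℝ)) = n := by exact_mod_cast hVs
    simp only [e, Finset.sum_sub_distrib, Finset.sum_add_distrib, ← Finset.mul_sum, hsum, hxs,
      piAlpha_sum α hsum, this]
    ring
  have hej : ∀ j : {j // j ≠ i₀}, |e j| < δ / d := by
    intro j; simpa [e, hV2] using hv j
  have hei : |e i₀| < δ := by
    have h1 : e i₀ = - ∑ j : {j // j ≠ i₀}, e j := by linarith [hsplit e]
    have hcard : (Fintype.card {j // j ≠ i₀} : ℝ) = d - 1 := by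
      have : Fintype.card {j // j ≠ i₀} = d - 1 := by simp [Fintype.card_subtype_compl]
      rw [this, Nat.cast_sub (by omega)]; simp
    calc |e i₀| ≤ ∑ j : {j // j ≠ i₀}, |e j| := by
            rw [h1, abs_neg]; exact Finset.abs_sum_le_sum_abs _ _
      _ ≤ ∑ j : {j // j ≠ i₀}, δ / d := Finset.sum_le_sum fun j _ => (hej j).le
      _ = (d - 1) * (δ / d) := by simp only [Finset.sum_const, Finset.card_univ, nsmul_eq_mul, hcard]
      _ < δ := by
        have : (d - 1) * (δ / d) = δ - δ / d := by field_simp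
        rw [this]; linarith [div_pos hδ hd0]
  have hall : ∀ i, |e i| < δ := by
    intro i
    by_cases hi : i = i₀
    · rw [hi]; exact hei
    · refine (hej ⟨i, hi⟩).trans_le (div_le_self hδ.le ?_)
      exact_mod_cast (by omega : 1 ≤ d)
  obtain ⟨w, hw, hwx⟩ := hx n
  have hpz : ∀ i, piAlpha α (z + e) i = piAlpha α z i + e i := by
    intro i
    simp only [piAlpha, Pi.sub_apply, Pi.add_apply, Pi.smul_apply, smul_eq_mul,
      Finset.sum_add_distrib, hes]
    ring
  have hkey := piAlpha_unique α hα (z + e) w (fun i => by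
      have h1 := abs_lt.1 (hall i)
      have h2 := hδz i
      simp only [Pi.add_apply]
      exact ⟨by linarith [h1.1, h2.1], by linarith [h1.2, h2.2]⟩) hw (fun i => c n i - V i)
    (by rw [Finset.sum_sub_distrib, hc, hVs, sub_self])
    (fun i => by
      rw [hpz, hwx, hxc]
      simp only [e]
      push_cast
      ring)
  have hcV : c n i₀ = V i₀ := by
    have := congrFun hkey i₀
    simpa [sub_eq_zero] using this
  refine ⟨n, ?_⟩
  rw [hxc, hcV]
  exact hei.trans_le hδη

theorem billiard_discrepancy_bounds {d : ℕ} (hd : 2 ≤ d)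
    (α : Fin d → ℝ) (hα : ∀ i, α i ∈ Set.Ioo (0:ℝ) 1) (hsum : ∑ i, α i = 1)
    (hirr : LinearIndependent ℚ α)
    (u : ℕ → Fin d) (x : ℕ → Fin d → ℝ)
    (hx0 : x 0 ∈ Ealpha α)
    (hrec : ∀ n : ℕ, x (n + 1) = x n + α - Pi.single (u n) 1)
    (hcode : ∀ n : ℕ, x n ∈ Ealphai α (u n)) :
    ENNReal.ofReal ((1 + ((d:ℝ) - 2) * ‖α‖) / 2)
        ≤ (⨆ n : ℕ, ENNReal.ofReal
            ‖(fun i => (((Finset.range n).filter fun k => u k = i).card : ℝ) - (n:ℝ) * α i)‖)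
    ∧ (⨆ n : ℕ, ENNReal.ofReal
          ‖(fun i => (((Finset.range n).filter fun k => u k = i).card : ℝ) - (n:ℝ) * α i)‖)
        ≤ ENNReal.ofReal (1 + ((d:ℝ) - 2) * ‖α‖)
    ∧ (⨆ n : ℕ, ENNReal.ofReal
          ‖(fun i => (((Finset.range n).filter fun k => u k = i).card : ℝ) - (n:ℝ) * α i)‖)
        ≤ ENNReal.ofReal ((d:ℝ) - 1)
    ∧ ENNReal.ofReal (((d:ℝ) - 1) / d)
        ≤ (⨆ n : ℕ, ENNReal.ofReal
            ‖(fun i => (((Finset.range n).filter fun k => u k = i).card : ℝ) - (n:ℝ) * α i)‖) := by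
  classical
  have hd0 : (0:ℝ) < d := by positivity
  have hd2 : (2:ℝ) ≤ d := by exact_mod_cast hd
  let c : ℕ → Fin d → ℤ := fun n i => (((Finset.range n).filter fun k => u k = i).card : ℤ)
  have hx : ∀ n, x n ∈ Ealpha α := by
    intro n
    obtain ⟨w, hw, h⟩ := hcode n
    exact ⟨w, hw.1, h⟩
  have hxc : ∀ n i, x n i = x 0 i + n * α i - c n i := by
    intro n i
    induction n with
    | zero => simp [c]
    | succ n ih =>
      rw [hrec]
      simp only [Pi.sub_apply, Pi.add_apply, ih, c, Finset.range_add_one, Finset.filter_insert]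
      by_cases h : u n = i
      · subst h
        simp
        ring
      · simp [h, Ne.symm h]
        ring
  have hc : ∀ n, ∑ i, c n i = n := by
    intro n
    have := Finset.card_eq_sum_card_fiberwise (s := Finset.range n) (t := Finset.univ) (f := u)
      (by intro _ _; simp)
    rw [Finset.card_range] at this
    simp only [c]
    exact_mod_cast this.symm
  have hfun : ∀ n : ℕ,
      (fun i => (((Finset.range n).filter fun k => u k = i).card : ℝ) - (n:ℝ) * α i)
        = x 0 - x n := by
    intro n
    funext i
    rw [Pi.sub_apply, hxc n i]
    simp only [c]
    push_cast
    ring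
  simp only [hfun]
  have hle : ∀ i, α i ≤ ‖α‖ := fun i => (le_abs_self _).trans (norm_le_pi_norm α i)
  have hα1 : ‖α‖ ≤ 1 := (pi_norm_le_iff_of_nonneg zero_le_one).2 fun i => by
    rw [Real.norm_of_nonneg (hα i).1.le]; exact (hα i).2.le
  have hαd : 1 / (d:ℝ) ≤ ‖α‖ := by
    have : ∑ i, α i ≤ ∑ _i : Fin d, ‖α‖ := Finset.sum_le_sum fun i _ => hle i
    rw [hsum] at this
    rw [div_le_iff₀ hd0]
    simpa [mul_comm] using this
  have hup : ∀ n, ‖x 0 - x n‖ ≤ 1 + ((d:ℝ) - 2) * ‖α‖ := by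
    intro n
    have hB : 0 ≤ 1 + ((d:ℝ) - 2) * ‖α‖ :=
      add_nonneg zero_le_one (mul_nonneg (by linarith) (norm_nonneg _))
    refine (pi_norm_le_iff_of_nonneg hB).2 fun i => ?_
    obtain ⟨w, hw, h⟩ := hx n
    obtain ⟨w', hw', h'⟩ := hx0
    have h1 := piAlpha_mem_range α hα w hw i
    have h2 := piAlpha_mem_range α hα w' hw' i
    rw [h] at h1
    rw [h'] at h2
    have h3 := mul_le_mul_of_nonneg_left (hle i) (by linarith : (0:ℝ) ≤ (d:ℝ) - 2)
    rw [Real.norm_eq_abs, Pi.sub_apply, abs_le]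
    constructor <;> linarith [h1.1, h1.2, h2.1, h2.2]
  have hU : (⨆ n : ℕ, ENNReal.ofReal ‖x 0 - x n‖) ≤ ENNReal.ofReal (1 + ((d:ℝ) - 2) * ‖α‖) :=
    iSup_le fun n => ENNReal.ofReal_le_ofReal (hup n)
  have hL : ENNReal.ofReal ((1 + ((d:ℝ) - 2) * ‖α‖) / 2)
      ≤ (⨆ n : ℕ, ENNReal.ofReal ‖x 0 - x n‖) := by
    set S := (⨆ n : ℕ, ENNReal.ofReal ‖x 0 - x n‖) with hS
    have hStop : S ≠ ⊤ := ne_top_of_le_ne_top ENNReal.ofReal_ne_top hU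
    apply ENNReal.ofReal_le_of_le_toReal
    set D := S.toReal with hD
    have hnD : ∀ n, ‖x 0 - x n‖ ≤ D := fun n =>
      (ENNReal.ofReal_le_iff_le_toReal hStop).1 (le_iSup (fun n => ENNReal.ofReal ‖x 0 - x n‖) n)
    obtain ⟨i, hi⟩ : ∃ i, ‖α‖ = α i := by
      have : Nonempty (Fin d) := ⟨⟨0, by omega⟩⟩
      obtain ⟨i, hi⟩ := Finite.exists_max α
      refine ⟨i, le_antisymm ((pi_norm_le_iff_of_nonneg (hα i).1.le).2 fun j => ?_) (hle i)⟩
      rw [Real.norm_of_nonneg (hα j).1.le]; exact hi j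
    have hopen : ∀ z : Fin d → ℝ, (∀ j, z j ∈ Set.Ioo (0:ℝ) 1) →
        |x 0 i - piAlpha α z i| ≤ D := by
      intro z hz
      refine le_of_forall_pos_le_add fun η hη => ?_
      obtain ⟨n, hn⟩ := billiard_dense hd α hα hsum hirr x c hc hx hxc z hz η hη i
      have h1 := (norm_le_pi_norm (x 0 - x n) i).trans (hnD n)
      rw [Real.norm_eq_abs, Pi.sub_apply] at h1
      have := abs_sub_le (x 0 i) (x n i) (piAlpha α z i)
      linarith
    have hclosed : ∀ z ∈ Set.Icc (0 : Fin d → ℝ) 1, |x 0 i - piAlpha α z i| ≤ D := by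
      have hcl : IsClosed {z : Fin d → ℝ | |x 0 i - piAlpha α z i| ≤ D} := by
        apply isClosed_le _ continuous_const
        unfold piAlpha
        simp only [Pi.sub_apply, Pi.smul_apply, smul_eq_mul]
        fun_prop
      have hsub : Set.univ.pi (fun _ : Fin d => Set.Ioo (0:ℝ) 1) ⊆
          {z : Fin d → ℝ | |x 0 i - piAlpha α z i| ≤ D} :=
        fun z hz => hopen z fun j => hz j (Set.mem_univ j)
      intro z hz
      apply closure_minimal hsub hcl
      rw [closure_pi_set]
      intro j _
      rw [closure_Ioo zero_ne_one]
      exact ⟨hz.1 j, hz.2 j⟩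
    have hs01 : (Pi.single i 1 : Fin d → ℝ) ∈ Set.Icc (0 : Fin d → ℝ) 1 := by
      constructor <;> intro j <;> by_cases h : j = i <;> simp [Pi.single_apply, h]
    have h1 := hclosed (Pi.single i 1) hs01
    have h2 := hclosed (1 - Pi.single i 1)
      ⟨sub_nonneg.2 hs01.2, sub_le_self _ hs01.1⟩
    have e1 : piAlpha α (Pi.single i 1) i = 1 - α i := by
      simp [piAlpha]
    have e2 : piAlpha α (1 - Pi.single i 1) i = -((d:ℝ) - 1) * α i := by
      simp [piAlpha, Finset.sum_sub_distrib]
      try ring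
    rw [e1, abs_le] at h1
    rw [e2, abs_le] at h2
    rw [hi]
    linarith [h1.1, h2.2]
  refine ⟨hL, hU, hU.trans (ENNReal.ofReal_le_ofReal ?_),
    (ENNReal.ofReal_le_ofReal ?_).trans hL⟩
  · nlinarith
  · have h3 := mul_le_mul_of_nonneg_left hαd (by linarith : (0:ℝ) ≤ (d:ℝ) - 2)
    have : ((d:ℝ) - 1) / d = (1 + ((d:ℝ) - 2) * (1 / d)) / 2 := by field_simp; ring
    rw [this]
    linarith
end

section
/- Let α ∈ ℝ^d and T_α : 𝕋^d → 𝕋^d the translation x ↦ x + α mod ℤ^d. Suppose 𝕋^d = W_1 ∪ … ∪ W_k where the W_i have pairwise disjoint interiors and each W_i is the projection to the torus of a finite union of bounded convex polytopes in ℝ^d. Then there exists a constant C > 0 such that for every point x₀ ∈ 𝕋^d with T_α^n(x₀) ∈ int(W_{u_n}) for all n, the coding sequence u satisfies p_u(n) ≤ C·n^d for all n ≥ 1. -/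
/-- Projection of `ℝ^d` onto the torus `𝕋^d = (ℝ/ℤ)^d`. -/
noncomputable def torusProj (d : ℕ) (x : Fin d → ℝ) : Fin d → AddCircle (1:ℝ) :=
  fun i => (x i : AddCircle (1:ℝ))

/-- No finite set of more than `d` affine functionals on `ℝ^d` has all its sign patterns. -/
theorem ptc_shatter {d : ℕ} {ι : Type} [Fintype ι] [DecidableEq ι]
    (l : ι → ((Fin d → ℝ) →ᵃ[ℝ] ℝ)) (s : Finset ι)
    (hs : ∀ t ⊆ s, ∃ y : Fin d → ℝ, ∀ i ∈ s, (i ∈ t ↔ 0 ≤ l i y)) : s.card ≤ d := by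
  classical
  by_contra hcard
  push Not at hcard
  have hdep : ¬ LinearIndependent ℝ (fun i : s => (l i).linear) := by
    intro h
    have := h.fintype_card_le_finrank
    rw [Fintype.card_coe, Module.finrank_linearMap] at this
    simp at this
    omega
  rw [Fintype.not_linearIndependent_iff] at hdep
  obtain ⟨g, hg0, i0, hi0⟩ := hdep
  -- the combination is constant
  have hconst : ∀ y z : Fin d → ℝ, ∑ i : s, g i * l i y = ∑ i : s, g i * l i z := by
    intro y z
    have h1 := congrArg (fun φ : (Fin d → ℝ) →ₗ[ℝ] ℝ => φ (y - z)) hg0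
    simp only [LinearMap.sum_apply, LinearMap.smul_apply, smul_eq_mul, LinearMap.zero_apply] at h1
    rw [← sub_eq_zero, ← Finset.sum_sub_distrib, ← h1]
    refine Finset.sum_congr rfl fun i _ => ?_
    have : (l i).linear (y - z) = l i y - l i z := by
      simpa using (l i).linearMap_vsub y z
    rw [this]; ring
  obtain ⟨y, hy⟩ := hs (s.filter fun i => ∃ h : i ∈ s, 0 < g ⟨i, h⟩) (Finset.filter_subset _ _)
  obtain ⟨z, hz⟩ := hs (s.filter fun i => ∃ h : i ∈ s, g ⟨i, h⟩ < 0) (Finset.filter_subset _ _)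
  have hy1 : ∀ i : s, 0 < g i → 0 ≤ l i y := fun i h => (hy i i.2).1 (by simp [h])
  have hy2 : ∀ i : s, ¬ 0 < g i → l i y < 0 := fun i h => by
    by_contra hc; push Not at hc
    have := (hy i i.2).2 hc
    simp at this; exact h this
  have hz1 : ∀ i : s, g i < 0 → 0 ≤ l i z := fun i h => (hz i i.2).1 (by simp [h])
  have hz2 : ∀ i : s, ¬ g i < 0 → l i z < 0 := fun i h => by
    by_contra hc; push Not at hc
    have := (hz i i.2).2 hc
    simp at this; exact h this
  have hlt : ∑ i : s, g i * l i z < ∑ i : s, g i * l i y := by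
    refine Finset.sum_lt_sum (fun i _ => ?_) ⟨i0, Finset.mem_univ _, ?_⟩
    · rcases lt_trichotomy (g i) 0 with h | h | h
      · have := hy2 i h.not_gt; have := hz1 i h; nlinarith
      · simp [h]
      · have := hy1 i h; have := hz2 i h.not_gt; nlinarith
    · rcases lt_or_gt_of_ne hi0 with h | h
      · have := hy2 i0 h.not_gt; have := hz1 i0 h; nlinarith
      · have := hy1 i0 h; have := hz2 i0 h.not_gt; nlinarith
  exact absurd (hconst z y) hlt.ne

/-- The number of sign patterns of `N` affine functionals on `ℝ^d`. -/
theorem ptc_count {d : ℕ} {ι : Type} [Fintype ι] [DecidableEq ι]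
    (l : ι → ((Fin d → ℝ) →ᵃ[ℝ] ℝ)) :
    (Set.range fun y : Fin d → ℝ => {i | 0 ≤ l i y}).ncard
      ≤ (d + 1) * (Fintype.card ι + 1) ^ d := by
  classical
  let A : Finset (Finset ι) :=
    Finset.univ.filter fun a => ∃ y : Fin d → ℝ, ∀ i, i ∈ a ↔ 0 ≤ l i y
  have h1 : (Set.range fun y : Fin d → ℝ => {i | 0 ≤ l i y}).ncard ≤ A.card := by
    rw [← Set.ncard_coe_finset A]
    refine Set.ncard_le_ncard_of_injOn (fun S => S.toFinset) ?_ ?_ A.finite_toSet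
    · rintro _ ⟨y, rfl⟩
      simp only [A, Finset.coe_filter, Set.mem_ofPred_eq, Finset.mem_univ, true_and]
      exact ⟨y, fun i => by simp⟩
    · intro S _ T _ h
      simpa using h
  have hvc : A.vcDim ≤ d := by
    refine Finset.sup_le fun s hs => ?_
    rw [Finset.mem_shatterer] at hs
    refine ptc_shatter l s fun t ht => ?_
    obtain ⟨u, hu, hut⟩ := hs ht
    obtain ⟨y, hy⟩ := (Finset.mem_filter.1 hu).2
    refine ⟨y, fun i hi => ?_⟩
    rw [← hy, ← hut]; simp [hi]
  calc _ ≤ A.card := h1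
    _ ≤ A.shatterer.card := A.card_le_card_shatterer
    _ ≤ ∑ k ∈ Finset.Iic A.vcDim, (Fintype.card ι).choose k := Finset.card_shatterer_le_sum_vcDim
    _ ≤ ∑ k ∈ Finset.Iic d, (Fintype.card ι).choose k :=
        Finset.sum_le_sum_of_subset (Finset.Iic_subset_Iic.2 hvc)
    _ ≤ ∑ k ∈ Finset.Iic d, (Fintype.card ι + 1) ^ d := by
        refine Finset.sum_le_sum fun k hk => ?_
        rw [Finset.mem_Iic] at hk
        calc _ ≤ Fintype.card ι ^ k := Nat.choose_le_pow _ _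
          _ ≤ (Fintype.card ι + 1) ^ k := Nat.pow_le_pow_left (by omega) _
          _ ≤ _ := Nat.pow_le_pow_right (by omega) hk
    _ = _ := by simp

theorem ptc_proj_cont (d : ℕ) : Continuous (torusProj d) := by
  unfold torusProj
  refine continuous_pi fun i => ?_
  exact (AddCircle.continuous_mk' (1:ℝ)).comp (continuous_apply i)

theorem ptc_proj_open (d : ℕ) : IsOpenMap (torusProj d) := by
  have : IsOpenMap (Pi.map (fun (_ : Fin d) (x : ℝ) => (x : AddCircle (1:ℝ)))) := by
    refine IsOpenMap.piMap (fun i => QuotientAddGroup.isOpenMap_coe) ?_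
    exact Filter.Eventually.of_forall fun i => QuotientAddGroup.mk_surjective
  exact this

theorem ptc_proj_add (d : ℕ) (x y : Fin d → ℝ) :
    torusProj d (x + y) = torusProj d x + torusProj d y := by
  funext i; simp [torusProj]

theorem ptc_proj_int (d : ℕ) (z : Fin d → ℤ) :
    torusProj d (fun i => (z i : ℝ)) = 0 := by
  funext i
  simp only [torusProj, Pi.zero_apply]
  rw [AddCircle.coe_eq_zero_iff]
  exact ⟨z i, by simp⟩

theorem ptc_proj_eq (d : ℕ) (x y : Fin d → ℝ) (h : torusProj d x = torusProj d y) :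
    ∃ z : Fin d → ℤ, x = y + fun i => (z i : ℝ) := by
  have : ∀ i, ∃ n : ℤ, x i = y i + n := by
    intro i
    have h1 : ((x i - y i : ℝ) : AddCircle (1:ℝ)) = 0 := by
      have := congrFun h i
      simp only [torusProj] at this
      rw [AddCircle.coe_sub, this, sub_self]
    rw [AddCircle.coe_eq_zero_iff] at h1
    obtain ⟨n, hn⟩ := h1
    refine ⟨n, ?_⟩
    simp at hn; linarith
  choose z hz using this
  exact ⟨z, funext hz⟩

theorem ptc_proj_fract (d : ℕ) (x : Fin d → ℝ) :
    torusProj d (fun i => Int.fract (x i)) = torusProj d x := by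
  have : x = (fun i => Int.fract (x i)) + fun i => ((⌊x i⌋ : ℤ) : ℝ) := by
    funext i; simp [Int.fract_add_floor]
  conv_rhs => rw [this, ptc_proj_add, ptc_proj_int d (fun i => ⌊x i⌋), add_zero]

theorem ptc_proj_surj (d : ℕ) : Function.Surjective (torusProj d) := by
  intro y
  have : ∀ i, ∃ x : ℝ, (x : AddCircle (1:ℝ)) = y i := fun i => QuotientAddGroup.mk_surjective (y i)
  choose x hx using this
  exact ⟨x, funext hx⟩

theorem ptc_simplex {d : ℕ} (t : Finset (Fin d → ℝ))
    (hi : AffineIndependent ℝ ((↑) : t → (Fin d → ℝ)))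
    (ht : affineSpan ℝ (t : Set (Fin d → ℝ)) = ⊤) :
    ∃ F : Finset ((Fin d → ℝ) →ᵃ[ℝ] ℝ),
      convexHull ℝ (t : Set (Fin d → ℝ)) = {x | ∀ f ∈ F, 0 ≤ f x} := by
  classical
  let b : AffineBasis t ℝ (Fin d → ℝ) := ⟨((↑) : t → (Fin d → ℝ)), hi, by
    rw [Subtype.range_coe_subtype]; exact ht⟩
  refine ⟨Finset.univ.image fun i => b.coord i, ?_⟩
  have h := b.convexHull_eq_nonneg_coord
  have hr : Set.range b = (t : Set (Fin d → ℝ)) := by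
    change Set.range ((↑) : t → (Fin d → ℝ)) = _
    rw [Subtype.range_coe_subtype]; rfl
  rw [hr] at h
  rw [h]
  ext x
  simp only [Set.mem_ofPred_eq, Finset.mem_image, Finset.mem_univ, true_and]
  constructor
  · rintro hx _ ⟨i, rfl⟩
    exact hx i
  · exact fun hx i => hx _ ⟨i, rfl⟩

open MeasureTheory in
/-- Structure of one piece. -/
theorem ptc_piece {d m : ℕ} (W : Set (Fin d → AddCircle (1:ℝ)))
    (S : Fin m → Finset (Fin d → ℝ))
    (hW : W = torusProj d '' (⋃ j, convexHull ℝ (S j : Set (Fin d → ℝ)))) :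
    ∃ 𝓕 : Finset (Finset ((Fin d → ℝ) →ᵃ[ℝ] ℝ)),
      (∀ F ∈ 𝓕, Bornology.IsBounded {x : Fin d → ℝ | ∀ f ∈ F, 0 ≤ f x}) ∧
      interior W ⊆ torusProj d '' (⋃ F ∈ 𝓕, {x : Fin d → ℝ | ∀ f ∈ F, 0 ≤ f x}) ∧
      torusProj d '' (⋃ F ∈ 𝓕, {x : Fin d → ℝ | ∀ f ∈ F, 0 ≤ f x}) ⊆ closure (interior W) := by
  classical
  -- all simplices
  let 𝒯 : Finset (Finset (Fin d → ℝ)) := (Finset.univ : Finset (Fin m)).biUnion fun j =>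
    (S j).powerset.filter fun t => AffineIndependent ℝ ((↑) : t → (Fin d → ℝ))
  have hcov : (⋃ j, convexHull ℝ (S j : Set (Fin d → ℝ)))
      = ⋃ t ∈ 𝒯, convexHull ℝ (t : Set (Fin d → ℝ)) := by
    ext x
    simp only [Set.mem_iUnion, 𝒯, Finset.mem_biUnion, Finset.mem_univ, true_and,
      Finset.mem_filter, Finset.mem_powerset]
    constructor
    · rintro ⟨j, hj⟩
      rw [convexHull_eq_union] at hj
      simp only [Set.mem_iUnion] at hj
      obtain ⟨t, h1, h2, h3⟩ := hj
      exact ⟨t, ⟨j, by exact_mod_cast h1, h2⟩, h3⟩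
    · rintro ⟨t, ⟨j, h1, h2⟩, h3⟩
      exact ⟨j, convexHull_mono (by exact_mod_cast h1) h3⟩
  have hind : ∀ t ∈ 𝒯, AffineIndependent ℝ ((↑) : t → (Fin d → ℝ)) := by
    intro t ht
    simp only [𝒯, Finset.mem_biUnion, Finset.mem_filter] at ht
    obtain ⟨_, _, _, h⟩ := ht
    exact h
  let 𝒢 : Finset (Finset (Fin d → ℝ)) := 𝒯.filter fun t : Finset (Fin d → ℝ) => affineSpan ℝ (t : Set (Fin d → ℝ)) = ⊤
  have hF : ∀ t : Finset (Fin d → ℝ), ∃ F : Finset ((Fin d → ℝ) →ᵃ[ℝ] ℝ), t ∈ 𝒢 →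
      convexHull ℝ (t : Set (Fin d → ℝ)) = {x | ∀ f ∈ F, 0 ≤ f x} := by
    intro t
    by_cases ht : t ∈ 𝒢
    · obtain ⟨h1, h2⟩ := Finset.mem_filter.1 ht
      obtain ⟨F, hF⟩ := ptc_simplex t (hind t h1) h2
      exact ⟨F, fun _ => hF⟩
    · exact ⟨∅, fun h => absurd h ht⟩
  choose Φ hΦ using hF
  have hV : (⋃ F ∈ 𝒢.image Φ, {x : Fin d → ℝ | ∀ f ∈ F, 0 ≤ f x})
      = ⋃ t ∈ 𝒢, convexHull ℝ (t : Set (Fin d → ℝ)) := by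
    rw [Finset.set_biUnion_finset_image]
    exact Set.iUnion₂_congr fun t ht => (hΦ t ht).symm
  have hcomp : ∀ t : Finset (Fin d → ℝ), IsCompact (convexHull ℝ (t : Set (Fin d → ℝ))) :=
    fun t => t.finite_toSet.isCompact_convexHull ℝ
  refine ⟨𝒢.image Φ, ?_, ?_, ?_⟩
  · intro F hF
    obtain ⟨t, ht, rfl⟩ := Finset.mem_image.1 hF
    rw [← hΦ t ht]
    exact (hcomp t).isBounded
  · rw [hV]
    set V := torusProj d '' ⋃ t ∈ 𝒢, convexHull ℝ (t : Set (Fin d → ℝ)) with hVdef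
    have hVcl : IsClosed V :=
      ((𝒢.isCompact_biUnion fun t _ => hcomp t).image (ptc_proj_cont d)).isClosed
    have hUo : IsOpen (torusProj d ⁻¹' (interior W \ V)) :=
      (isOpen_interior.sdiff hVcl).preimage (ptc_proj_cont d)
    let N : Set (Fin d → ℝ) := ⋃ z : Fin d → ℤ, ⋃ t ∈ 𝒯 \ 𝒢,
      (fun x => x + fun i => (z i : ℝ)) ⁻¹' (affineSpan ℝ (t : Set (Fin d → ℝ)) : Set (Fin d → ℝ))
    have hN : volume N = 0 := by
      refine measure_iUnion_null fun z => ?_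
      refine (measure_biUnion_null_iff (Finset.countable_toSet (𝒯 \ 𝒢))).2 ?_
      intro t ht
      rw [measure_preimage_add_right]
      refine Measure.addHaar_affineSubspace _ _ fun h => ?_
      have ht' := Finset.mem_sdiff.1 ht
      exact ht'.2 (Finset.mem_filter.2 ⟨ht'.1, h⟩)
    have hsub : torusProj d ⁻¹' (interior W \ V) ⊆ N := by
      rintro x ⟨hx1, hx2⟩
      have hx3 := interior_subset hx1
      rw [hW, hcov] at hx3
      obtain ⟨y, hy, hyx⟩ := hx3
      simp only [Set.mem_iUnion] at hy
      obtain ⟨t, ht, hyt⟩ := hy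
      obtain ⟨z, hz⟩ := ptc_proj_eq d y x hyx
      simp only [N, Set.mem_iUnion]
      refine ⟨z, t, Finset.mem_sdiff.2 ⟨ht, fun htg => hx2 ?_⟩, ?_⟩
      · exact ⟨y, Set.mem_iUnion₂.2 ⟨t, htg, hyt⟩, hyx⟩
      · rw [Set.mem_preimage, ← hz]
        exact convexHull_subset_affineSpan _ hyt
    have hemp := hUo.eq_empty_of_measure_zero (measure_mono_null hsub hN)
    intro p hp
    by_contra hpV
    obtain ⟨x, rfl⟩ := ptc_proj_surj d p
    have : x ∈ torusProj d ⁻¹' (interior W \ V) := ⟨hp, hpV⟩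
    rw [hemp] at this
    exact this
  · rw [hV]
    rintro _ ⟨x, hx, rfl⟩
    obtain ⟨t, ht, hxt⟩ := Set.mem_iUnion₂.1 hx
    obtain ⟨h1, h2⟩ := Finset.mem_filter.1 ht
    have hne := interior_convexHull_nonempty_iff_affineSpan_eq_top.2 h2
    have hx' : x ∈ closure (interior (convexHull ℝ (t : Set (Fin d → ℝ)))) := by
      rw [(convex_convexHull ℝ _).closure_interior_eq_closure_of_nonempty_interior hne]
      exact subset_closure hxt
    have h3 := image_closure_subset_closure_image (ptc_proj_cont d) ⟨x, hx', rfl⟩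
    refine closure_mono ?_ h3
    refine interior_maximal ?_ (ptc_proj_open d _ isOpen_interior)
    rw [hW, hcov]
    exact Set.image_mono (interior_subset.trans
      (Set.subset_biUnion_of_mem (u := fun t : Finset (Fin d → ℝ) =>
        convexHull ℝ (t : Set (Fin d → ℝ))) h1))

theorem polytopal_coding_complexity_upper_bound {d k : ℕ}
    (α : Fin d → ℝ)
    (W : Fin k → Set (Fin d → AddCircle (1:ℝ)))
    (hWcover : (⋃ i, W i) = Set.univ)
    (hWdisj : ∀ i j, i ≠ j → Disjoint (interior (W i)) (interior (W j)))
    (hWpoly : ∀ i, ∃ (m : ℕ) (S : Fin m → Finset (Fin d → ℝ)),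
        W i = torusProj d '' (⋃ j, convexHull ℝ (S j : Set (Fin d → ℝ)))) :
    ∃ C : ℝ, 0 < C ∧
      ∀ (x₀ : Fin d → AddCircle (1:ℝ)) (u : ℕ → Fin k),
        (∀ n : ℕ, (fun y => y + torusProj d α)^[n] x₀ ∈ interior (W (u n))) →
        ∀ n : ℕ, 1 ≤ n →
          ({w : Fin n → Fin k | ∃ s : ℕ, ∀ t : Fin n, w t = u (s + t.1)}.ncard : ℝ)
            ≤ C * (n : ℝ) ^ d := by
  classical
  have hp : ∀ i, ∃ 𝓕 : Finset (Finset ((Fin d → ℝ) →ᵃ[ℝ] ℝ)),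
      (∀ F ∈ 𝓕, Bornology.IsBounded {x : Fin d → ℝ | ∀ f ∈ F, 0 ≤ f x}) ∧
      interior (W i) ⊆ torusProj d '' (⋃ F ∈ 𝓕, {x : Fin d → ℝ | ∀ f ∈ F, 0 ≤ f x}) ∧
      torusProj d '' (⋃ F ∈ 𝓕, {x : Fin d → ℝ | ∀ f ∈ F, 0 ≤ f x})
        ⊆ closure (interior (W i)) := by
    intro i
    obtain ⟨m, S, hS⟩ := hWpoly i
    exact ptc_piece (W i) S hS
  choose 𝓕 hbd hin hcl using hp
  have hbdd : Bornology.IsBounded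
      (⋃ i : Fin k, ⋃ F ∈ 𝓕 i, {x : Fin d → ℝ | ∀ f ∈ F, 0 ≤ f x}) := by
    rw [Bornology.isBounded_iUnion]
    intro i
    rw [Bornology.isBounded_biUnion_finset]
    exact hbd i
  obtain ⟨R, hR⟩ := hbdd.subset_closedBall 0
  obtain ⟨K, hK⟩ := exists_nat_gt R
  let B : Finset (Fin d → ℤ) := Fintype.piFinset fun _ => Finset.Icc (-(K + 2) : ℤ) (K + 2)
  let G : Finset ((Fin d → ℝ) →ᵃ[ℝ] ℝ) := Finset.univ.biUnion fun i => (𝓕 i).biUnion id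
  let b := B.card * G.card
  refine ⟨(d + 1) * (b + 1) ^ d, by positivity, ?_⟩
  intro x₀ u hu n hn
  -- lifts of the orbit
  have hlift : ∀ s : ℕ, ∃ y : Fin d → ℝ, (∀ i, 0 ≤ y i ∧ y i < 1) ∧
      torusProj d y = (fun y => y + torusProj d α)^[s] x₀ := by
    intro s
    obtain ⟨x, hx⟩ := ptc_proj_surj d ((fun y => y + torusProj d α)^[s] x₀)
    exact ⟨fun i => Int.fract (x i), fun i => ⟨Int.fract_nonneg _, Int.fract_lt_one _⟩,
      (ptc_proj_fract d x).trans hx⟩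
  choose y hy01 hy using hlift
  let β : ℕ → Fin d → ℝ := fun t i => Int.fract ((t : ℝ) * α i)
  have hβ : ∀ s t : ℕ, torusProj d (y s + β t) = (fun y => y + torusProj d α)^[s + t] x₀ := by
    intro s t
    rw [ptc_proj_add, hy, ptc_proj_fract d (fun i => (t : ℝ) * α i)]
    induction t with
    | zero =>
      have : (fun i => ((0 : ℕ) : ℝ) * α i) = fun i => (((0 : Fin d → ℤ) i : ℤ) : ℝ) := by
        funext i; simp
      rw [this, ptc_proj_int]; simp
    | succ t ih =>
      have : (fun i => ((t + 1 : ℕ) : ℝ) * α i) = (fun i => (t : ℝ) * α i) + α := by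
        funext i; simp; ring
      rw [this, ptc_proj_add, ← add_assoc, ih, ← add_assoc, Function.iterate_succ_apply']
  let ι := Fin n × B × G
  let l : ι → ((Fin d → ℝ) →ᵃ[ℝ] ℝ) := fun q =>
    (q.2.2 : (Fin d → ℝ) →ᵃ[ℝ] ℝ).comp
      (AffineMap.id ℝ (Fin d → ℝ) +
        AffineMap.const ℝ (Fin d → ℝ) (β q.1 + fun i => (((q.2.1 : Fin d → ℤ) i : ℤ) : ℝ)))
  have hl : ∀ (q : ι) (x : Fin d → ℝ), l q x =
      (q.2.2 : (Fin d → ℝ) →ᵃ[ℝ] ℝ)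
        (x + β q.1 + fun i => (((q.2.1 : Fin d → ℤ) i : ℤ) : ℝ)) := by
    intro q x
    simp [l, add_assoc]
  have key : ∀ s s' : ℕ, {q | 0 ≤ l q (y s)} = {q | 0 ≤ l q (y s')} →
      ∀ t : Fin n, u (s + t) = u (s' + t) := by
    intro s s' h t
    have h1 := hin _ (hu (s + t))
    rw [← hβ] at h1
    obtain ⟨q, hq, hqe⟩ := h1
    obtain ⟨z, hz⟩ := ptc_proj_eq d _ _ hqe
    obtain ⟨F, hF, hqF⟩ := Set.mem_iUnion₂.1 hq
    have hzB : z ∈ B := by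
      simp only [B, Fintype.mem_piFinset, Finset.mem_Icc]
      intro i
      have hqR : q ∈ Metric.closedBall (0 : Fin d → ℝ) R := hR (Set.mem_iUnion.2 ⟨_, hq⟩)
      rw [mem_closedBall_zero_iff] at hqR
      have h2 := (norm_le_pi_norm q i).trans hqR
      rw [Real.norm_eq_abs, abs_le] at h2
      have h3 := congrFun hz i
      simp only [Pi.add_apply] at h3
      have h4 := hy01 s i
      have h5 : 0 ≤ β t i := Int.fract_nonneg _
      have h6 : β t i < 1 := Int.fract_lt_one _
      constructor
      · have : (-(K + 2) : ℝ) ≤ z i := by linarith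
        exact_mod_cast this
      · have : (z i : ℝ) ≤ K + 2 := by linarith
        exact_mod_cast this
    have h2 : torusProj d (y s' + β t) ∈ closure (interior (W (u (s + t)))) := by
      refine hcl _ ⟨y s' + β t + fun i => (z i : ℝ), Set.mem_iUnion₂.2 ⟨F, hF, ?_⟩, ?_⟩
      · intro f hf
        have hfG : f ∈ G := by
          simp only [G, Finset.mem_biUnion, Finset.mem_univ, true_and, id]
          exact ⟨_, F, hF, hf⟩
        have h3 : ((t, ⟨z, hzB⟩, ⟨f, hfG⟩) : ι) ∈ {q | 0 ≤ l q (y s)} := by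
          rw [Set.mem_ofPred_eq, hl]
          have := hqF f hf
          rw [hz] at this
          exact this
        rw [h, Set.mem_ofPred_eq, hl] at h3
        exact h3
      · rw [ptc_proj_add, ptc_proj_int, add_zero]
    rw [hβ] at h2
    by_contra hne
    have h3 := (hWdisj _ _ hne).closure_left isOpen_interior
    exact Set.disjoint_left.1 h3 h2 (hu (s' + t))
  have hcount := ptc_count l
  have hle : {w : Fin n → Fin k | ∃ s : ℕ, ∀ t : Fin n, w t = u (s + t.1)}.ncard ≤
      (Set.range fun y : Fin d → ℝ => {i | 0 ≤ l i y}).ncard := by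
    have hch : ∀ w : Fin n → Fin k, ∃ s : ℕ,
        w ∈ {w : Fin n → Fin k | ∃ s : ℕ, ∀ t : Fin n, w t = u (s + t.1)} →
        ∀ t : Fin n, w t = u (s + t.1) := by
      intro w
      by_cases hw : ∃ s : ℕ, ∀ t : Fin n, w t = u (s + t.1)
      · obtain ⟨s, hs⟩ := hw
        exact ⟨s, fun _ => hs⟩
      · exact ⟨0, fun h => absurd h hw⟩
    choose σ hσ using hch
    refine Set.ncard_le_ncard_of_injOn (fun w => {q | 0 ≤ l q (y (σ w))}) ?_ ?_ (Set.toFinite _)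
    · intro w _
      exact ⟨y (σ w), rfl⟩
    · intro w hw w' hw' h
      funext t
      rw [hσ w hw, hσ w' hw']
      exact key _ _ h t
  have hcard : Fintype.card ι + 1 ≤ (b + 1) * n := by
    have : Fintype.card ι = n * b := by simp [ι, b]
    rw [this]; nlinarith
  have hfin : {w : Fin n → Fin k | ∃ s : ℕ, ∀ t : Fin n, w t = u (s + t.1)}.ncard ≤
      (d + 1) * ((b + 1) * n) ^ d :=
    (hle.trans hcount).trans (Nat.mul_le_mul_left _ (Nat.pow_le_pow_left hcard _))
  calc (({w : Fin n → Fin k | ∃ s : ℕ, ∀ t : Fin n, w t = u (s + t.1)}.ncard : ℕ) : ℝ)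
      ≤ (((d + 1) * ((b + 1) * n) ^ d : ℕ) : ℝ) := by exact_mod_cast hfin
    _ = _ := by push_cast; rw [mul_pow]; ring
end

section
/- Let α ∈ (0,1)^d be totally irrational and let u be the Tijdeman sequence with parameters (α, C, C', 0) where C = C' = 1 − (1 + min_i α_i)/(2d−2) and d ≥ 3. Then the discrepancy satisfies Δ_α(u) ≤ max{C, C'} = 1 − (1 + min_i α_i)/(2d−2) < 1 − 1/(2d−2). -/
/-- The piece `S_{α,C,C',i}` of Tijdeman's construction, as a predicate on points of
`1^⊥ ∩ [-C',∞)^d`. -/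
def inS {d : ℕ} (α : Fin d → ℝ) (C C' : ℝ) (i : Fin d) (x : Fin d → ℝ) : Prop :=
  (∑ j, x j = 0) ∧ (∀ j, -C' ≤ x j) ∧ (-C' ≤ x i + α i - 1) ∧
    ∀ j : Fin d, -C' ≤ x j + α j - 1 → (C - x i) / α i ≤ (C - x j) / α j

theorem tij_core {d : ℕ} (hd : 3 ≤ d) (α : Fin d → ℝ) (m C : ℝ) (hm0 : 0 < m)
    (hm : ∀ i, m ≤ α i) (hsum : ∑ i, α i = 1)
    (hC : (2 * (d:ℝ) - 2) * (1 - C) = 1 + m)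
    (x : ℕ → Fin d → ℝ) (u : ℕ → Fin d) (hx0 : x 0 = 0)
    (hx : ∀ n, x (n+1) = x n + α - Pi.single (u n) 1)
    (hS : ∀ n, inS α C C (u n) (x n)) (N : ℕ) (k : Fin d) : x N k ≤ C := by
  by_contra hk
  push Not at hk
  have hd' : (3:ℝ) ≤ d := by exact_mod_cast hd
  have hα0 : ∀ i, 0 < α i := fun i => lt_of_lt_of_le hm0 (hm i)
  have hmd : (d:ℝ) * m ≤ 1 := by
    have := Finset.sum_le_sum (s := Finset.univ) (fun i _ => hm i)
    simpa [hsum] using this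
  have hm3 : m ≤ 1/3 := by nlinarith
  have hC1 : 0 < 1 - C := by
    by_contra h
    push Not at h
    nlinarith
  have hC2 : 1 - C ≤ 1/3 := by nlinarith
  obtain ⟨y, hy⟩ : ∃ y : ℕ → Fin d → ℝ, ∀ t j, y t j = x t j + ((N:ℝ) - t) * α j :=
    ⟨_, fun _ _ => rfl⟩
  have hys : ∀ t j, y (t+1) j = y t j - (if u t = j then 1 else 0) := by
    intro t j
    rw [hy, hy, hx]
    simp only [Pi.sub_apply, Pi.add_apply, Pi.single_apply]
    push_cast
    by_cases h : u t = j
    · simp [h]; ring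
    · have h' : ¬ j = u t := fun e => h e.symm
      simp [h, h']; ring
  have hyN : ∀ j, y N j = x N j := by intro j; rw [hy]; simp
  have hex : ∃ n, n ≤ N ∧ ∀ t, n ≤ t → t < N → C < y t (u t) :=
    ⟨N, le_rfl, fun t h1 h2 => by omega⟩
  classical
  obtain ⟨n, ⟨hnN, hn⟩, hmin⟩ : ∃ n, (n ≤ N ∧ ∀ t, n ≤ t → t < N → C < y t (u t)) ∧
      ∀ n' < n, ¬ (n' ≤ N ∧ ∀ t, n' ≤ t → t < N → C < y t (u t)) :=
    ⟨Nat.find hex, Nat.find_spec hex, fun n' h => Nat.find_min hex h⟩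
  set J : Finset (Fin d) := Finset.univ.filter (fun j => C < y n j) with hJ
  have key : ∀ s, n + s ≤ N → (∀ j, y (n+s) j ≤ y n j) ∧ (∀ j ∈ J, C - 1 < y (n+s) j) ∧
      ∑ j ∈ J, y (n+s) j = ∑ j ∈ J, y n j - s := by
    intro s
    induction s with
    | zero =>
      intro _
      refine ⟨fun j => le_rfl, fun j hj => ?_, by simp⟩
      have : C < y n j := by simpa [hJ] using hj
      simp only [add_zero]; linarith
    | succ s ih =>
      intro hs
      obtain ⟨h1, h2, h3⟩ := ih (by omega)
      have hp := hn (n+s) (by omega) (by omega)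
      have hmem : u (n+s) ∈ J := by
        simp only [hJ, Finset.mem_filter, Finset.mem_univ, true_and]
        exact lt_of_lt_of_le hp (h1 _)
      rw [← add_assoc]
      refine ⟨fun j => ?_, fun j hj => ?_, ?_⟩
      · rw [hys]; have := h1 j; split_ifs <;> linarith
      · rw [hys]
        have := h2 j hj
        split_ifs with h
        · subst h; linarith
        · linarith
      · simp only [hys, Finset.sum_sub_distrib, h3]
        rw [Finset.sum_ite_eq, if_pos hmem]
        push_cast; ring
  obtain ⟨k1, k2, k3⟩ := key (N - n) (by omega)
  rw [show n + (N - n) = N by omega] at k1 k2 k3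
  rw [Nat.cast_sub hnN] at k3
  have hkJ : k ∈ J := by
    simp only [hJ, Finset.mem_filter, Finset.mem_univ, true_and]
    have := k1 k
    rw [hyN] at this
    linarith
  -- lower bound for the sum
  have hlow : 1 - (J.card : ℝ) * (1 - C) < ∑ j ∈ J, y N j := by
    rw [← Finset.add_sum_erase J _ hkJ]
    have h1 : ∑ j ∈ J.erase k, (C - 1) ≤ ∑ j ∈ J.erase k, y N j :=
      Finset.sum_le_sum fun j hj => (k2 j (Finset.mem_of_mem_erase hj)).le
    rw [Finset.sum_const, nsmul_eq_mul, Finset.card_erase_of_mem hkJ,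
      Nat.cast_sub (Finset.card_pos.mpr ⟨k, hkJ⟩)] at h1
    have := hyN k
    push_cast at h1
    nlinarith
  have hsumy : ∑ j ∈ J, y n j = ∑ j ∈ J, x n j + ((N:ℝ) - n) * ∑ j ∈ J, α j := by
    simp only [hy, Finset.sum_add_distrib, Finset.mul_sum]
  have hαJ : ∑ j ∈ J, α j ≤ 1 := by
    rw [← hsum]
    exact Finset.sum_le_sum_of_subset_of_nonneg (Finset.subset_univ _) fun i _ _ => (hα0 i).le
  have hNn : (0:ℝ) ≤ (N:ℝ) - n := by
    have : (n:ℝ) ≤ N := by exact_mod_cast hnN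
    linarith
  rcases n with _ | M
  · have hc : (J.card : ℝ) ≤ d := by
      have := Finset.card_le_univ J
      simp only [Fintype.card_fin] at this
      exact_mod_cast this
    simp only [hx0, Pi.zero_apply, Finset.sum_const_zero] at hsumy
    have h1 : (J.card : ℝ) * (1 - C) ≤ d * (1 - C) := by gcongr
    have h2 : (d:ℝ) * (1 - C) ≤ 1 := by nlinarith
    nlinarith
  · have hM : y M (u M) ≤ C := by
      by_contra hcon
      push Not at hcon
      refine hmin M (by omega) ⟨by omega, fun t h1 h2 => ?_⟩
      rcases Nat.eq_or_lt_of_le h1 with h | h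
      · subst h; exact hcon
      · exact hn t h h2
    have hnot : u M ∉ J := by
      simp only [hJ, Finset.mem_filter, Finset.mem_univ, true_and, not_lt]
      rw [hys]; simp; linarith
    have hJx : ∀ j ∈ J, x (M+1) j < 1 - C := by
      intro j hj
      have hne : u M ≠ j := fun e => hnot (e ▸ hj)
      have hyj : C < y (M+1) j := by simpa [hJ] using hj
      rw [hys, if_neg hne, sub_zero] at hyj
      have hxj : x (M+1) j = x M j + α j := by
        rw [hx]; simp [Pi.single_apply, hne.symm]
      rw [hxj]
      by_contra hcon
      have h4 := (hS M).2.2.2 j (by linarith)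
      rw [hy] at hM hyj
      have h5 : (N:ℝ) - M ≤ (C - x M (u M)) / α (u M) := by
        rw [le_div_iff₀ (hα0 _)]; linarith
      have h6 : (C - x M j) / α j < (N:ℝ) - M := by
        rw [div_lt_iff₀ (hα0 _)]; linarith
      linarith
    have hc : (J.card : ℝ) ≤ d - 1 := by
      have h1 : J.card < (Finset.univ : Finset (Fin d)).card :=
        Finset.card_lt_card ((Finset.ssubset_univ_iff).mpr fun e => hnot (e ▸ Finset.mem_univ _))
      simp only [Finset.card_univ, Fintype.card_fin] at h1
      have : ((J.card + 1 : ℕ) : ℝ) ≤ d := by exact_mod_cast h1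
      push_cast at this; linarith
    have hαJ' : ∑ j ∈ J, α j ≤ 1 - m := by
      have h1 : ∑ j ∈ insert (u M) J, α j ≤ 1 := by
        rw [← hsum]
        exact Finset.sum_le_sum_of_subset_of_nonneg (Finset.subset_univ _)
          fun i _ _ => (hα0 i).le
      rw [Finset.sum_insert hnot] at h1
      linarith [hm (u M)]
    have hup : ∑ j ∈ J, x (M+1) j ≤ (J.card : ℝ) * (1 - C) := by
      have := Finset.sum_le_sum fun j hj => (hJx j hj).le
      simpa [mul_sub] using this
    rcases Nat.eq_or_lt_of_le hnN with h | h
    · have := hJx k hkJ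
      rw [h] at this
      linarith
    · have hN1 : (1:ℝ) ≤ (N:ℝ) - ((M+1 : ℕ) : ℝ) := by
        have : ((M + 1 + 1 : ℕ) : ℝ) ≤ N := by exact_mod_cast h
        push_cast at this ⊢; linarith
      have h1 : (J.card : ℝ) * (1 - C) ≤ (d - 1) * (1 - C) := by gcongr
      have h2 : m ≤ ((N:ℝ) - ((M+1 : ℕ) : ℝ)) * (1 - ∑ j ∈ J, α j) := by nlinarith
      nlinarith

theorem tijdeman_sequence_discrepancy_lt_Dd {d : ℕ} (hd : 3 ≤ d)
    (α : Fin d → ℝ) (hα : ∀ i, α i ∈ Set.Ioo (0:ℝ) 1) (hsum : ∑ i, α i = 1)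
    (hirr : LinearIndependent ℚ α)
    (C : ℝ) (hC : C = 1 - (1 + ⨅ i, α i) / (2 * (d:ℝ) - 2))
    (T : (Fin d → ℝ) → (Fin d → ℝ))
    -- `T` is the Tijdeman map with parameters `C = C'`, ties broken by smallest index
    (hT : ∀ x : Fin d → ℝ, (∑ i, x i = 0) → (∀ i, -C ≤ x i) →
      ∃ i : Fin d, inS α C C i x ∧ (∀ j : Fin d, inS α C C j x → i ≤ j) ∧
        T x = x + α - Pi.single i 1)
    (u : ℕ → Fin d)
    -- `u` is the Tijdeman sequence with starting point `x₀ = 0`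
    (hu : ∀ n : ℕ, T^[n + 1] (0 : Fin d → ℝ) = T^[n] 0 + α - Pi.single (u n) 1) :
    (∀ n : ℕ,
      ‖(fun i => (n:ℝ) * α i - (((Finset.range n).filter fun t => u t = i).card : ℝ))‖ ≤ C)
    ∧ C < 1 - 1 / (2 * (d:ℝ) - 2) := by
  haveI : Nonempty (Fin d) := ⟨⟨0, by omega⟩⟩
  have hd' : (3:ℝ) ≤ d := by exact_mod_cast hd
  obtain ⟨m, hmdef⟩ : ∃ m, m = ⨅ i, α i := ⟨_, rfl⟩
  have hm : ∀ i, m ≤ α i := fun i => hmdef ▸ ciInf_le (Set.finite_range α).bddBelow i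
  have hm0 : 0 < m := by
    obtain ⟨i, hi⟩ := exists_eq_ciInf_of_finite (f := α)
    rw [hmdef, ← hi]; exact (hα i).1
  rw [← hmdef] at hC
  have hpos : 0 < 2 * (d:ℝ) - 2 := by linarith
  have hC' : (2 * (d:ℝ) - 2) * (1 - C) = 1 + m := by
    rw [hC, sub_sub_cancel, mul_div_cancel₀ _ hpos.ne']
  have hm3 : m ≤ 1 := (hm (Classical.arbitrary _)).trans (hα _).2.le
  have hC0 : 0 ≤ C := by nlinarith
  have inv : ∀ n, (∑ i, T^[n] (0 : Fin d → ℝ) i = 0) ∧ (∀ i, -C ≤ T^[n] (0 : Fin d → ℝ) i) := by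
    intro n
    induction n with
    | zero => simp [hC0]
    | succ n ih =>
      obtain ⟨i, hi, -, hTi⟩ := hT _ ih.1 ih.2
      rw [Function.iterate_succ_apply', hTi]
      constructor
      · simp [Finset.sum_add_distrib, ih.1, hsum]
      · intro j
        simp only [Pi.sub_apply, Pi.add_apply, Pi.single_apply]
        split_ifs with h
        · subst h; exact hi.2.2.1
        · linarith [ih.2 j, (hα j).1]
  have hS : ∀ n, inS α C C (u n) (T^[n] 0) := by
    intro n
    obtain ⟨i, hi, -, hTi⟩ := hT _ (inv n).1 (inv n).2
    have h := hu n
    rw [Function.iterate_succ_apply', hTi] at h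
    have h2 := congrFun h i
    have : u n = i := by
      by_contra hne
      have hne' : ¬ i = u n := fun e => hne e.symm
      simp [Pi.single_apply, hne'] at h2
    rw [this]; exact hi
  have hval : ∀ (n : ℕ) (i : Fin d), (n:ℝ) * α i - (((Finset.range n).filter fun t => u t = i).card : ℝ)
      = T^[n] (0 : Fin d → ℝ) i := by
    intro n i
    induction n with
    | zero => simp
    | succ n ih =>
      rw [hu, Finset.range_add_one, Finset.filter_insert]
      simp only [Pi.sub_apply, Pi.add_apply, Pi.single_apply, ← ih]
      by_cases h : u n = i
      · rw [if_pos h, if_pos h.symm, Finset.card_insert_of_notMem (by simp)]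
        push_cast; ring
      · rw [if_neg h, if_neg (fun e => h e.symm)]
        push_cast; ring
  refine ⟨fun n => ?_, ?_⟩
  · rw [pi_norm_le_iff_of_nonneg hC0]
    intro i
    rw [hval, Real.norm_eq_abs, abs_le]
    exact ⟨(inv n).2 i, tij_core hd α m C hm0 hm hsum hC' (fun n => T^[n] 0) u rfl hu hS n i⟩
  · rw [hC]
    have : 1 / (2 * (d:ℝ) - 2) < (1 + m) / (2 * (d:ℝ) - 2) := by
      gcongr; linarith
    linarith
end
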